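/- arXiv:1703.00976 — 2 statements merged into one kernel-verified Lean document; each statement's English description precedes it below -/
import Mathlib

section
/- Assume s > λ_f and 1/α ≥ s − λ_f. Then the optimal Demand Response reward is zero: Π_DR(r) ≤ Π_DR(0) = (λ_f − s)·μ for every r ≥ 0. -/
/-!
A reward `r` lowers a nonnegative realised demand `d` by `min (α * r) d`, which lies between `0` and
`α * r`. Each unit of demand avoided saves `s - lf`, so when `(s - lf) * α ≤ 1` the saving is at
most `r`, the cost of the reward. This holds for every realisation of the demand, hence in
expectation.
-/

open MeasureTheory Set

section RandomDemand

variable {Ω : Type*} [MeasurableSpace Ω] {P : Measure Ω} {D : Ω → ℝ} {s lf α : ℝ}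

/-- The expected profit under Demand Response, as a function of the reward `r`, for a random demand
`D` with elasticity `α`, expected spot price `s` and retail tariff `lf`. -/
noncomputable def demandResponseProfit (P : Measure Ω) (D : Ω → ℝ) (s lf α r : ℝ) : ℝ :=
  (lf - s) * (∫ ω, max (D ω - α * r) 0 ∂P) - r

theorem demandResponseProfit_zero_reward (hD_nonneg : ∀ᵐ ω ∂P, 0 ≤ D ω) :
    demandResponseProfit P D s lf α 0 = (lf - s) * ∫ ω, D ω ∂P := by
  have h_unchanged : (fun ω ↦ max (D ω - α * 0) 0) =ᵐ[P] D := by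
    filter_upwards [hD_nonneg] with ω hω
    rw [mul_zero, sub_zero, max_eq_left hω]
  rw [demandResponseProfit, integral_congr_ae h_unchanged, sub_zero]

theorem mul_max_sub_zero_sub_reward_le {d r : ℝ} (hα : 0 ≤ α) (helast : (s - lf) * α ≤ 1)
    (hd : 0 ≤ d) (hr : 0 ≤ r) : (lf - s) * max (d - α * r) 0 - r ≤ (lf - s) * d := by
  have h_reduction : max (d - α * r) 0 = d - min (α * r) d := by
    rw [← sub_self d, max_sub_sub_left]
  have h_saving : (s - lf) * min (α * r) d ≤ r := by
    rcases le_total s lf with hsl | hls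
    · have h_min : 0 ≤ min (α * r) d := le_min (mul_nonneg hα hr) hd
      exact (mul_nonpos_of_nonpos_of_nonneg (sub_nonpos.2 hsl) h_min).trans hr
    · calc (s - lf) * min (α * r) d
          ≤ (s - lf) * (α * r) := mul_le_mul_of_nonneg_left (min_le_left _ _) (sub_nonneg.2 hls)
        _ = (s - lf) * α * r := (mul_assoc _ _ _).symm
        _ ≤ r := mul_le_of_le_one_left hr helast
  rw [h_reduction]
  linarith

theorem demandResponseProfit_le [IsProbabilityMeasure P] {r : ℝ} (hD : Integrable D P)
    (hD_nonneg : ∀ᵐ ω ∂P, 0 ≤ D ω) (hα : 0 ≤ α) (helast : (s - lf) * α ≤ 1) (hr : 0 ≤ r) :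
    demandResponseProfit P D s lf α r ≤ (lf - s) * ∫ ω, D ω ∂P := by
  have h_int : Integrable (fun ω ↦ (lf - s) * max (D ω - α * r) 0) P :=
    (hD.sub (integrable_const (α * r))).pos_part.const_mul _
  calc demandResponseProfit P D s lf α r
      = ∫ ω, ((lf - s) * max (D ω - α * r) 0 - r) ∂P := by
        rw [integral_sub h_int (integrable_const r), integral_const_mul, integral_const,
          probReal_univ, one_smul, demandResponseProfit]
    _ ≤ ∫ ω, (lf - s) * D ω ∂P := by
        refine integral_mono_ae (h_int.sub (integrable_const r)) (hD.const_mul _) ?_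
        filter_upwards [hD_nonneg] with ω hω
        exact mul_max_sub_zero_sub_reward_le hα helast hω hr
    _ = (lf - s) * ∫ ω, D ω ∂P := integral_const_mul _ _

theorem optimal_demand_response_zero_reward_general [IsProbabilityMeasure P]
    (hD : Integrable D P) (hD_nonneg : ∀ᵐ ω ∂P, 0 ≤ D ω) (hα : 0 ≤ α) (helast : (s - lf) * α ≤ 1) :
    (∀ r, 0 ≤ r → demandResponseProfit P D s lf α r ≤ demandResponseProfit P D s lf α 0) ∧
      demandResponseProfit P D s lf α 0 = (lf - s) * ∫ ω, D ω ∂P := by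
  have h_zero := demandResponseProfit_zero_reward (s := s) (lf := lf) (α := α) hD_nonneg
  exact ⟨fun r hr ↦ h_zero ▸ demandResponseProfit_le hD hD_nonneg hα helast hr, h_zero⟩

end RandomDemand

section DensityOnInterval

variable {f : ℝ → ℝ} {a b : ℝ}

/-- The measure on the open interval `(a, b)` with density `f` with respect to Lebesgue measure;
negative values of `f` are replaced by `0`. It turns a demand density into the law of the demand. -/
noncomputable def intervalDensityMeasure (f : ℝ → ℝ) (a b : ℝ) : Measure ℝ :=
  (volume.restrict (Ioo a b)).withDensity fun x ↦ ENNReal.ofReal (f x)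

theorem ae_mem_Ioo_intervalDensityMeasure : ∀ᵐ x ∂intervalDensityMeasure f a b, x ∈ Ioo a b :=
  (withDensity_absolutelyContinuous _ _).ae_le (ae_restrict_mem measurableSet_Ioo)

theorem integrable_id_intervalDensityMeasure [IsFiniteMeasure (intervalDensityMeasure f a b)] :
    Integrable (fun x ↦ x) (intervalDensityMeasure f a b) :=
  .of_mem_Icc a b aemeasurable_id
    (ae_mem_Ioo_intervalDensityMeasure.mono fun _ hx ↦ Ioo_subset_Icc_self hx)

theorem integral_intervalDensityMeasure (hab : a ≤ b)
    (hf : AEMeasurable f (volume.restrict (Ioo a b))) (hf_nonneg : ∀ x ∈ Ioo a b, 0 ≤ f x)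
    (g : ℝ → ℝ) :
    ∫ x, g x ∂intervalDensityMeasure f a b = ∫ x in a..b, g x * f x := by
  rw [intervalDensityMeasure, integral_withDensity_eq_integral_toReal_smul₀ hf.ennreal_ofReal
    (.of_forall fun _ ↦ ENNReal.ofReal_lt_top), intervalIntegral.integral_of_le hab,
    integral_Ioc_eq_integral_Ioo]
  refine setIntegral_congr_fun measurableSet_Ioo fun x hx ↦ ?_
  simp only [ENNReal.toReal_ofReal (hf_nonneg x hx), smul_eq_mul, mul_comm]

theorem isProbabilityMeasure_intervalDensityMeasure (hab : a ≤ b)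
    (hf_nonneg : ∀ x ∈ Ioo a b, 0 ≤ f x) (hf_int : ∫ x in a..b, f x = 1) :
    IsProbabilityMeasure (intervalDensityMeasure f a b) := by
  have hf : IntervalIntegrable f volume a b :=
    intervalIntegral.intervalIntegrable_of_integral_ne_zero (hf_int ▸ one_ne_zero)
  have hf_meas : AEMeasurable f (volume.restrict (Ioo a b)) :=
    ((intervalIntegrable_iff_integrableOn_Ioo_of_le hab).1 hf).aemeasurable
  have h_mass := integral_intervalDensityMeasure hab hf_meas hf_nonneg fun _ ↦ 1
  simp only [integral_const, smul_eq_mul, mul_one, one_mul, hf_int] at h_mass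
  exact isProbabilityMeasure_iff_real.2 h_mass

end DensityOnInterval

/-- Optimal Demand Response reward is zero when 1/α ≥ s − λ_f
(Theorem 3, second case). -/
theorem optimal_demand_response_zero_reward
    (f F : ℝ → ℝ) (dmax μ s lf α : ℝ)
    (hdmax : 0 < dmax)
    (hf_cont : Continuous f)
    (hf_supp : ∀ x, x < 0 ∨ dmax < x → f x = 0)
    (hf_pos : ∀ x ∈ Set.Ioo 0 dmax, 0 < f x)
    (hf_int : (∫ x in (0:ℝ)..dmax, f x) = 1)
    (hF : ∀ x, F x = ∫ t in (0:ℝ)..x, f t)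
    (hμ : μ = ∫ x in (0:ℝ)..dmax, x * f x)
    (hs : 0 < s) (hlf : 0 ≤ lf)
    (hα : 0 < α)
    (hspread : s > lf) (helast : 1 / α ≥ s - lf)
    (PiDR : ℝ → ℝ)
    (hPiDR : ∀ r, PiDR r = (lf - s) * (∫ x in (0:ℝ)..dmax, max (x - α * r) 0 * f x) - r) :
    (∀ r, 0 ≤ r → PiDR r ≤ PiDR 0) ∧ PiDR 0 = (lf - s) * μ := by
  have hf_nonneg : ∀ x ∈ Ioo 0 dmax, 0 ≤ f x := fun x hx ↦ (hf_pos x hx).le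
  have h_expect := integral_intervalDensityMeasure hdmax.le hf_cont.aemeasurable hf_nonneg
  set P := intervalDensityMeasure f 0 dmax
  have : IsProbabilityMeasure P :=
    isProbabilityMeasure_intervalDensityMeasure hdmax.le hf_nonneg hf_int
  have h_demand_nonneg : ∀ᵐ x ∂P, 0 ≤ x := ae_mem_Ioo_intervalDensityMeasure.mono fun _ hx ↦ hx.1.le
  have h_profit : PiDR = demandResponseProfit P (fun x ↦ x) s lf α := by
    ext r
    rw [hPiDR, demandResponseProfit, h_expect]
  rw [h_profit, hμ, ← h_expect]
  exact optimal_demand_response_zero_reward_general integrable_id_intervalDensityMeasure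
    h_demand_nonneg hα.le ((le_div_iff₀ hα).1 helast)
end

section
/- Assume the demand is uniformly distributed on [d_min, d_max], s > λ_f, α > 0 and 1/α < s − λ_f, and set a_DR = 1 − 1/(α·(s − λ_f)). Then the optimal expected Demand Response profit satisfies (λ_f − s)·∫_{F⁻¹(a_DR)}^{d_max} x·f(x) dx = −d_min/α − √3·(s − λ_f)·(1 − a_DR²)·σ; in particular it decreases linearly in the standard deviation σ. -/
/-!
For uniform demand on `[l, u]`, the partial expectation above the quantile of level `a ∈ [0, 1]` is
`l * (1 - a) + (u - l) * (1 - a ^ 2) / 2`, and `(u - l) / 2 = √3 * σ`. The elasticity condition puts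
`aDR` in `[0, 1]`, and this level is calibrated so that `(s - lf) * (1 - aDR) = 1 / α`: the term
linear in `1 - aDR` contributes exactly `dmin / α`.
-/

open MeasureTheory Set

section UniformDensity

variable {f : ℝ → ℝ} {l u a σ : ℝ}

lemma uniform_quantile_mem_Icc (hlu : l ≤ u) (ha : a ∈ Icc (0 : ℝ) 1) :
    l + (u - l) * a ∈ Icc l u := by
  simpa only [smul_eq_mul, mul_comm a] using
    (convex_Icc l u).add_smul_sub_mem (left_mem_Icc.2 hlu) (right_mem_Icc.2 hlu) ha

lemma integral_id_mul_uniform_density_above_quantile (hlu : l < u)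
    (hf : ∀ x ∈ Icc l u, f x = 1 / (u - l)) (ha : a ∈ Icc (0 : ℝ) 1) :
    ∫ x in (l + (u - l) * a)..u, x * f x = l * (1 - a) + (u - l) * (1 - a ^ 2) / 2 := by
  have hq : l + (u - l) * a ∈ Icc l u := uniform_quantile_mem_Icc hlu.le ha
  have hL : u - l ≠ 0 := (sub_pos.2 hlu).ne'
  calc ∫ x in (l + (u - l) * a)..u, x * f x
      = ∫ x in (l + (u - l) * a)..u, x * (1 / (u - l)) := by
        refine intervalIntegral.integral_congr fun x hx => ?_
        have hx' : x ∈ Icc l u := uIcc_subset_Icc hq (right_mem_Icc.2 hlu.le) hx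
        simp only [hf x hx']
    _ = (u ^ 2 - (l + (u - l) * a) ^ 2) / 2 * (1 / (u - l)) := by
        rw [intervalIntegral.integral_mul_const, integral_id]
    _ = l * (1 - a) + (u - l) * (1 - a ^ 2) / 2 := by
        field_simp
        ring

lemma integral_id_mul_uniform_density_above_quantile_eq_stdDev (hlu : l < u)
    (hf : ∀ x ∈ Icc l u, f x = 1 / (u - l)) (hσ : σ = (u - l) / (2 * √3))
    (ha : a ∈ Icc (0 : ℝ) 1) :
    ∫ x in (l + (u - l) * a)..u, x * f x = l * (1 - a) + √3 * (1 - a ^ 2) * σ := by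
  have hσ' : √3 * σ = (u - l) / 2 := by
    rw [hσ]
    field_simp
  rw [integral_id_mul_uniform_density_above_quantile hlu hf ha]
  linear_combination -(1 - a ^ 2) * hσ'

end UniformDensity

theorem demand_response_profit_dispersion_uniform_general
    {f Finv : ℝ → ℝ} {dmin dmax σ s lf α aDR : ℝ} (hdd : dmin < dmax)
    (hf : ∀ x ∈ Icc dmin dmax, f x = 1 / (dmax - dmin))
    (hFinv : ∀ a, Finv a = dmin + (dmax - dmin) * a)
    (hσ : σ = (dmax - dmin) / (2 * √3))
    (helast : 1 ≤ α * (s - lf)) (haDR : aDR = 1 - 1 / (α * (s - lf))) :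
    (lf - s) * (∫ x in (Finv aDR)..dmax, x * f x)
      = -dmin / α - √3 * (s - lf) * (1 - aDR ^ 2) * σ := by
  have ha : aDR ∈ Icc (0 : ℝ) 1 :=
    haDR ▸ Icc.one_sub_mem (unitInterval.div_mem zero_le_one (zero_le_one.trans helast) helast)
  have hcalib : (s - lf) * (1 - aDR) = 1 / α := by
    have hspread : s - lf ≠ 0 := right_ne_zero_of_mul (zero_lt_one.trans_le helast).ne'
    rw [haDR, sub_sub_cancel, mul_one_div, div_mul_cancel_right₀ hspread, one_div]
  rw [hFinv, integral_id_mul_uniform_density_above_quantile_eq_stdDev hdd hf hσ ha]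
  linear_combination -dmin * hcalib

/-- Dispersion form of the optimal Demand Response profit for
uniformly distributed demand. -/
theorem demand_response_profit_dispersion_uniform
    (f Finv : ℝ → ℝ) (dmin dmax μ σ s lf α : ℝ)
    (hdmin : 0 ≤ dmin) (hdd : dmin < dmax)
    (hf : ∀ x ∈ Set.Icc dmin dmax, f x = 1 / (dmax - dmin))
    (hFinv : ∀ a, Finv a = dmin + (dmax - dmin) * a)
    (hμ : μ = (dmin + dmax) / 2)
    (hσ : σ = (dmax - dmin) / (2 * Real.sqrt 3))
    (hs : 0 < s) (hlf : 0 ≤ lf)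
    (hspread : s > lf) (hα : 0 < α) (helast : 1 / α < s - lf)
    (aDR : ℝ) (haDR : aDR = 1 - 1 / (α * (s - lf))) :
    (lf - s) * (∫ x in (Finv aDR)..dmax, x * f x)
      = -dmin / α - Real.sqrt 3 * (s - lf) * (1 - aDR ^ 2) * σ :=
  demand_response_profit_dispersion_uniform_general hdd hf hFinv hσ
    ((div_lt_iff₀' hα).1 helast).le haDR
end
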